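/- Let q be a real number with 0 < q and q ≠ 1, let l₁, l₂, α₁, λ be real numbers and t₁, t₂ nonzero reals. Assume λ + α₁ = -N for some positive integer N (so (q^{λ+α₁};q)_n = 0 for all n > N and the series below is a finite sum). Then the function g(x) = x^{-α₁} · Σ_{n=0}^{N} (q^{1/2}/x)^n · (q^{λ+α₁};q)_n · Σ_{k=0}^{n} (q^{l₁}t₁)^k · (q^{l₂}t₂)^{n-k} / ((q;q)_k (q;q)_{n-k}) satisfies the variant of the confluent q-hypergeometric equation of type (2,0) for all x > 0. -/

import Mathlib

/-- The finite q-shifted factorial `(a;q)_n = ∏_{i=0}^{n-1} (1 - a q^i)`. -/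
noncomputable def qPoch (q a : ℝ) (n : ℕ) : ℝ :=
  ∏ i ∈ Finset.range n, (1 - a * q ^ i)

/-- The variant of the confluent q-hypergeometric equation of type (2,0) (for `x > 0`). -/
def confEq20 (q l₁ l₂ α₁ lam t₁ t₂ : ℝ) (g : ℝ → ℝ) : Prop :=
  ∀ x : ℝ, 0 < x →
    q ^ (-2 * lam - 1) * (1 - q ^ (-l₁ + 1/2) * t₁⁻¹ * x) * (1 - q ^ (-l₂ + 1/2) * t₂⁻¹ * x)
        * g (q * x)
    + g (x / q)
    - (q ^ (-α₁ - l₁ - l₂ - 2 * lam) * t₁⁻¹ * t₂⁻¹ * x ^ 2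
        - q ^ (-lam - 1/2) * (q ^ (-l₁) * t₁⁻¹ + q ^ (-l₂) * t₂⁻¹) * x
        + q ^ (-lam) * (1 + q⁻¹)) * g x = 0

lemma qPoch_succ (q a : ℝ) (n : ℕ) : qPoch q a (n+1) = qPoch q a n * (1 - a * q ^ n) := by
  simp [qPoch, Finset.prod_range_succ]

lemma qPoch_self_ne (q : ℝ) (hq : 0 < q) (hq1 : q ≠ 1) (n : ℕ) : qPoch q q n ≠ 0 := by
  unfold qPoch
  rw [Finset.prod_ne_zero_iff]
  intro i _ h
  have h1 : q ^ (i+1) = 1 := by rw [pow_succ']; linarith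
  exact hq1 ((pow_eq_one_iff_of_nonneg hq.le (Nat.succ_ne_zero i)).1 h1)

noncomputable def hh (q a b : ℝ) (n : ℕ) : ℝ :=
  ∑ k ∈ Finset.range (n + 1), a ^ k * b ^ (n - k) / (qPoch q q k * qPoch q q (n - k))

noncomputable def eS (q a : ℝ) : PowerSeries ℝ := PowerSeries.mk fun n => a ^ n / qPoch q q n

lemma eS_rescale (q a : ℝ) (hq : 0 < q) (hq1 : q ≠ 1) :
    PowerSeries.rescale q (eS q a) = (1 - PowerSeries.C a * PowerSeries.X) * eS q a := by
  ext n
  rw [sub_mul, one_mul, map_sub, mul_assoc, PowerSeries.coeff_C_mul, PowerSeries.coeff_rescale]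
  cases n with
  | zero => simp
  | succ n =>
    rw [PowerSeries.coeff_succ_X_mul]
    simp only [eS, PowerSeries.coeff_mk]
    have h1 := qPoch_self_ne q hq hq1 n
    have h2 := qPoch_self_ne q hq hq1 (n+1)
    have h3 := qPoch_succ q q n
    rw [h3] at h2 ⊢
    have h4 := right_ne_zero_of_mul h2
    field_simp
    ring

lemma hh_coeff (q a b : ℝ) (n : ℕ) : PowerSeries.coeff n (eS q a * eS q b) = hh q a b n := by
  rw [PowerSeries.coeff_mul, Finset.Nat.sum_antidiagonal_eq_sum_range_succ_mk]
  unfold hh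
  refine Finset.sum_congr rfl fun k _ => ?_
  simp only [eS, PowerSeries.coeff_mk]
  rw [div_mul_div_comm]

lemma hh_series (q a b : ℝ) (hq : 0 < q) (hq1 : q ≠ 1) :
    PowerSeries.rescale q (eS q a * eS q b) = eS q a * eS q b
      - PowerSeries.C (a + b) * (PowerSeries.X * (eS q a * eS q b))
      + PowerSeries.C (a * b) * (PowerSeries.X * (PowerSeries.X * (eS q a * eS q b))) := by
  rw [map_mul, eS_rescale q a hq hq1, eS_rescale q b hq hq1, map_add, map_mul]
  ring

lemma hh_one (q a b : ℝ) (hq : 0 < q) (hq1 : q ≠ 1) :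
    (1 - q) * hh q a b 1 = (a + b) * hh q a b 0 := by
  have h := congrArg (PowerSeries.coeff 1) (hh_series q a b hq hq1)
  rw [PowerSeries.coeff_rescale, map_add, map_sub, PowerSeries.coeff_C_mul,
    PowerSeries.coeff_C_mul, PowerSeries.coeff_succ_X_mul, PowerSeries.coeff_succ_X_mul,
    PowerSeries.coeff_zero_X_mul, hh_coeff, hh_coeff] at h
  linarith

lemma hh_rec (q a b : ℝ) (hq : 0 < q) (hq1 : q ≠ 1) (n : ℕ) :
    (1 - q ^ (n+2)) * hh q a b (n+2) = (a + b) * hh q a b (n+1) - a * b * hh q a b n := by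
  have h := congrArg (PowerSeries.coeff (n+2)) (hh_series q a b hq hq1)
  rw [PowerSeries.coeff_rescale, map_add, map_sub, PowerSeries.coeff_C_mul,
    PowerSeries.coeff_C_mul, PowerSeries.coeff_succ_X_mul, PowerSeries.coeff_succ_X_mul,
    PowerSeries.coeff_succ_X_mul, hh_coeff, hh_coeff, hh_coeff] at h
  linarith

/-- Termwise operator. -/
noncomputable def TT (q a b s P Q x : ℝ) (n : ℕ) : ℝ :=
  (P⁻¹ ^ 2 * q⁻¹ * (1 - s / a * x) * (1 - s / b * x) * Q⁻¹ * (q ^ n)⁻¹ + Q * q ^ n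
   - (Q⁻¹ * P⁻¹ ^ 2 / (a * b) * x ^ 2 - P⁻¹ * s⁻¹ * (a⁻¹ + b⁻¹) * x + P⁻¹ * (1 + q⁻¹)))
   * ((s / x) ^ n * (qPoch q (P * Q) n * hh q a b n))

lemma TT_sum (q a b s P Q x : ℝ) (hq : 0 < q) (hq1 : q ≠ 1) (ha : a ≠ 0) (hb : b ≠ 0)
    (hs : s ≠ 0) (hsq : q = s ^ 2) (hP : P ≠ 0) (hQ : Q ≠ 0) (hx : x ≠ 0) (M : ℕ) :
    ∑ n ∈ Finset.range (M + 1), TT q a b s P Q x n =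
      (s / x) ^ M * (1 - P * Q * q ^ M) * qPoch q (P * Q) M * P⁻¹ *
        (((P * Q) * q * q ^ M)⁻¹ * (1 - P * Q * q * q ^ M) * hh q a b M
          - x * s * (P * Q * q * q ^ M)⁻¹ / (a * b) * (1 - q * q ^ M) * hh q a b (M+1)) := by
  induction M with
  | zero =>
    have h1 := hh_one q a b hq hq1
    have h2 : hh q a b 1 * (1 - q) = (a + b) * hh q a b 0 := by linarith
    simp only [zero_add, Finset.sum_range_one, TT, pow_zero, mul_one, qPoch, Finset.range_zero,
      Finset.prod_empty, one_mul, inv_one]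
    have h3 : ∀ z : ℝ, z * (1 - q) * hh q a b 1 = z * ((a + b) * hh q a b 0) := by
      intro z; rw [mul_assoc, h1]
    rw [h3]
    subst hsq
    field_simp
    ring
  | succ M ih =>
    have h1 := hh_rec q a b hq hq1 M
    rw [Finset.sum_range_succ, ih]
    have h3 : ∀ z : ℝ, z * (1 - q * q ^ (M+1)) * hh q a b (M+1+1)
        = z * ((a + b) * hh q a b (M+1) - a * b * hh q a b M) := by
      intro z; rw [← h1]; ring
    rw [h3]
    simp only [TT, qPoch_succ, pow_succ _ M]
    have hz : q ^ M ≠ 0 := pow_ne_zero _ hq.ne'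
    generalize q ^ M = z at *
    generalize (s / x) ^ M = w at *
    generalize qPoch q (P * Q) M = p at *
    generalize hh q a b M = y0 at *
    generalize hh q a b (M+1) = y1 at *
    clear h1 h3 ih
    subst hsq
    field_simp
    ring

theorem stmt16 (q l₁ l₂ α₁ lam t₁ t₂ : ℝ) (N : ℕ)
    (hq : 0 < q) (hq1 : q ≠ 1) (ht₁ : t₁ ≠ 0) (ht₂ : t₂ ≠ 0)
    (hN : 0 < N) (hNlam : lam + α₁ = -(N : ℝ)) :
    confEq20 q l₁ l₂ α₁ lam t₁ t₂ (fun x =>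
      x ^ (-α₁) * ∑ n ∈ Finset.range (N + 1),
        (q ^ (1/2 : ℝ) / x) ^ n * qPoch q (q ^ (lam + α₁)) n *
          ∑ k ∈ Finset.range (n + 1),
            (q ^ l₁ * t₁) ^ k * (q ^ l₂ * t₂) ^ (n - k) /
              (qPoch q q k * qPoch q q (n - k))) := by
  intro x hx
  have hu : q ^ lam * q ^ α₁ * q ^ N = 1 := by
    rw [← Real.rpow_add hq, hNlam, ← Real.rpow_natCast, ← Real.rpow_add hq]; simp
  have hs2 : q = (q ^ (1/2 : ℝ)) ^ 2 := by
    rw [← Real.rpow_natCast, ← Real.rpow_mul hq.le]; norm_num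
  have hs : q ^ (1/2 : ℝ) ≠ 0 := (Real.rpow_pos_of_pos hq _).ne'
  have hP : q ^ lam ≠ 0 := (Real.rpow_pos_of_pos hq _).ne'
  have hQ : q ^ α₁ ≠ 0 := (Real.rpow_pos_of_pos hq _).ne'
  have hA : q ^ l₁ ≠ 0 := (Real.rpow_pos_of_pos hq _).ne'
  have hB : q ^ l₂ ≠ 0 := (Real.rpow_pos_of_pos hq _).ne'
  have key := TT_sum q (q ^ l₁ * t₁) (q ^ l₂ * t₂) (q ^ (1/2 : ℝ)) (q ^ lam) (q ^ α₁) x hq hq1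
    (mul_ne_zero hA ht₁) (mul_ne_zero hB ht₂) hs hs2 hP hQ hx.ne' N
  rw [hu, sub_self, mul_zero, zero_mul, zero_mul, zero_mul] at key
  have e1 : q ^ (-2 * lam - 1) = (q ^ lam)⁻¹ ^ 2 * q⁻¹ := by
    rw [Real.rpow_sub hq, Real.rpow_one, show -2 * lam = -lam + -lam by ring, Real.rpow_add hq,
      Real.rpow_neg hq.le]; ring
  have e2 : ∀ l : ℝ, q ^ (-l + 1/2) = (q ^ l)⁻¹ * q ^ (1/2 : ℝ) := by
    intro l; rw [Real.rpow_add hq, Real.rpow_neg hq.le]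
  have e3 : q ^ (-α₁ - l₁ - l₂ - 2 * lam)
      = (q ^ α₁)⁻¹ * (q ^ l₁)⁻¹ * (q ^ l₂)⁻¹ * (q ^ lam)⁻¹ ^ 2 := by
    rw [show -α₁ - l₁ - l₂ - 2 * lam = -α₁ + -l₁ + -l₂ + -lam + -lam by ring]
    simp only [Real.rpow_add hq, Real.rpow_neg hq.le]; ring
  have e4 : q ^ (-lam - 1/2) = (q ^ lam)⁻¹ * (q ^ (1/2 : ℝ))⁻¹ := by
    rw [sub_eq_add_neg, Real.rpow_add hq, Real.rpow_neg hq.le, Real.rpow_neg hq.le]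
  have e5 : (q * x) ^ (-α₁) = (q ^ α₁)⁻¹ * x ^ (-α₁) := by
    rw [Real.mul_rpow hq.le hx.le, Real.rpow_neg hq.le]
  have e6 : (x / q) ^ (-α₁) = q ^ α₁ * x ^ (-α₁) := by
    rw [Real.div_rpow hx.le hq.le, Real.rpow_neg hq.le, div_inv_eq_mul, mul_comm]
  simp only [e1, e2, e3, e4, e5, e6, Real.rpow_neg hq.le, Real.rpow_add hq lam]
  rw [← mul_zero (x ^ (-α₁)), ← key]
  have e7 : ∀ n, (q ^ (1/2 : ℝ) / (q * x)) ^ n = (q ^ (1/2 : ℝ) / x) ^ n * (q ^ n)⁻¹ := by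
    intro n
    rw [← inv_pow, ← mul_pow]; congr 1; field_simp
  have e8 : ∀ n, (q ^ (1/2 : ℝ) / (x / q)) ^ n = (q ^ (1/2 : ℝ) / x) ^ n * q ^ n := by
    intro n
    rw [← mul_pow]; congr 1; field_simp
  have e9 : ∀ n, (∑ k ∈ Finset.range (n + 1),
            (q ^ l₁ * t₁) ^ k * (q ^ l₂ * t₂) ^ (n - k) /
              (qPoch q q k * qPoch q q (n - k))) = hh q (q ^ l₁ * t₁) (q ^ l₂ * t₂) n :=
    fun n => rfl
  simp only [e7, e8, e9]
  simp only [Finset.mul_sum, ← Finset.sum_add_distrib, ← Finset.sum_sub_distrib]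
  refine Finset.sum_congr rfl fun n _ => ?_
  simp only [TT, div_eq_mul_inv, mul_inv]
  ring
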